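/- Let S̃_8 ⊆ Sp_6(ℤ_2) denote the full preimage of the embedded copy of S_8 ⊆ Sp_6(ℤ/2ℤ) under mod-2 reduction. If H ⊆ Sp_6(ℤ_2) is a closed subgroup whose image under reduction modulo 8 equals the image of S̃_8 under reduction modulo 8, then H = S̃_8. -/

import Mathlib

open Matrix

/-- The standard symplectic matrix `Ω`, block-diagonal with `2×2` blocks `[[0,1],[-1,0]]`. -/
def OmegaMat (g : ℕ) (R : Type) [CommRing R] : Matrix (Fin (2*g)) (Fin (2*g)) R :=
  Matrix.of fun i j =>
    if (i : ℕ) + 1 = (j : ℕ) ∧ (j : ℕ) % 2 = 1 then 1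
    else if (j : ℕ) + 1 = (i : ℕ) ∧ (i : ℕ) % 2 = 1 then -1 else 0

/-- The symplectic group `Sp_{2g}(R)`, as a set of invertible matrices:
those `S` with `SᵀΩS = Ω`. -/
def SpSet (g : ℕ) (R : Type) [CommRing R] : Set (GL (Fin (2*g)) R) :=
  {S | (S : Matrix (Fin (2*g)) (Fin (2*g)) R)ᵀ * OmegaMat g R * S = OmegaMat g R}

/-- The general symplectic group `GSp_{2g}(R)`, as a set of invertible matrices:
those `S` with `SᵀΩS = m·Ω` for some unit `m` (the multiplier). -/
def GSpSet (g : ℕ) (R : Type) [CommRing R] : Set (GL (Fin (2*g)) R) :=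
  {S | ∃ m : Rˣ, (S : Matrix (Fin (2*g)) (Fin (2*g)) R)ᵀ * OmegaMat g R * S = (m : R) • OmegaMat g R}

/-- The all-ones vector `t ∈ V = (ℤ/2ℤ)^{2g+2}`. -/
def tvec (g : ℕ) : Fin (2*g+2) → ZMod 2 := fun _ => 1

/-- The line spanned by `t`. -/
def tline (g : ℕ) : Submodule (ZMod 2) (Fin (2*g+2) → ZMod 2) :=
  Submodule.span (ZMod 2) {tvec g}

/-- `t^⊥`: the vectors of `V` orthogonal to `t` for the standard bilinear form
`⟨u,v⟩ = ∑ uᵢvᵢ`, i.e. those whose coordinates sum to zero. -/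
def tperp (g : ℕ) : Set (Fin (2*g+2) → ZMod 2) := {v | ∑ i, v i = 0}

/-- The matrix of the map `ψ : M → V` sending the symplectic basis vector `f_{1,n}`
(column `2n-2`, 0-based) of `M = (ℤ/2ℤ)^{2g}` to `ē_1 + ⋯ + ē_{2n}` and `f_{2,n}`
(column `2n-1`) to `ē_{2n+1} + ē_1 + ⋯ + ē_{2n-1}`; `ψ` composed with the quotient map
`t^⊥ → W = t^⊥/span(t)` is the identification of `M` with `W` used to realize the
isometries of `W` as the matrix group `Sp_{2g}(ℤ/2ℤ)`. -/
def PsiMat (g : ℕ) : Matrix (Fin (2*g+2)) (Fin (2*g)) (ZMod 2) :=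
  Matrix.of fun k j =>
    if (j : ℕ) % 2 = 0 then (if (k : ℕ) < (j : ℕ) + 2 then 1 else 0)
    else (if (k : ℕ) < (j : ℕ) ∨ (k : ℕ) = (j : ℕ) + 1 then 1 else 0)

/-- The permutation matrix of `σ`, acting on coordinates of `V`: `(P_σ v) k = v (σ⁻¹ k)`. -/
def permMat (g : ℕ) (σ : Equiv.Perm (Fin (2*g+2))) :
    Matrix (Fin (2*g+2)) (Fin (2*g+2)) (ZMod 2) :=
  Matrix.of fun k j => if σ j = k then 1 else 0

/-- `A ∈ Sp_{2g}(ℤ/2ℤ)` is the matrix (w.r.t. the symplectic basis carried by `ψ`) of the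
action of the permutation `σ ∈ S_{2g+2}` on `W = t^⊥/span(t)`: this says that each column of
`Ψ·A − P_σ·Ψ` lies in `span(t)`, i.e. `ψ(A·m) ≡ σ·ψ(m) mod t` for every `m ∈ M`.
The embedded copy of `S_{2g+2}` inside `Sp_{2g}(ℤ/2ℤ)` is the set of matrices representing
some permutation in this sense. -/
def representsPerm (g : ℕ) (A : Matrix (Fin (2*g)) (Fin (2*g)) (ZMod 2))
    (σ : Equiv.Perm (Fin (2*g+2))) : Prop :=
  ∀ j, (fun k => (PsiMat g * A - permMat g σ * PsiMat g) k j) ∈ tline g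

/-- Entrywise mod-2 reduction `GL_{2g}(ℤ_2) → GL_{2g}(ℤ/2ℤ)`. -/
noncomputable def redMod2 (g : ℕ) : GL (Fin (2*g)) ℤ_[2] →* GL (Fin (2*g)) (ZMod 2) :=
  Units.map ((PadicInt.toZMod).mapMatrix.toMonoidHom)

/-- Entrywise mod-8 reduction `GL_6(ℤ_2) → GL_6(ℤ/8ℤ)`. -/
noncomputable def redMod8 (g : ℕ) : GL (Fin (2*g)) ℤ_[2] →* GL (Fin (2*g)) (ZMod (2^3)) :=
  Units.map ((PadicInt.toZModPow 3).mapMatrix.toMonoidHom)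

/-- The subgroup `S̃_8 ⊆ Sp_6(ℤ_2)`: the full preimage of the embedded copy of
`S_8 ⊆ Sp_6(ℤ/2ℤ)` under mod-2 reduction, as a set. -/
noncomputable def StildeSet : Set (GL (Fin (2*3)) ℤ_[2]) :=
  {x | x ∈ SpSet 3 ℤ_[2] ∧ ∃ σ : Equiv.Perm (Fin (2*3+2)),
    representsPerm 3 ((redMod2 3 x : GL (Fin (2*3)) (ZMod 2))
      : Matrix (Fin (2*3)) (Fin (2*3)) (ZMod 2)) σ}

/-- Divisibility of a matrix by `2^n`. -/
def D2 (n : ℕ) (x : Matrix (Fin (2*3)) (Fin (2*3)) ℤ_[2]) : Prop :=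
  ∃ C : Matrix (Fin (2*3)) (Fin (2*3)) ℤ_[2], x = ((2:ℤ_[2])^n) • C

lemma D2.mul_left {n : ℕ} {x : Matrix (Fin (2*3)) (Fin (2*3)) ℤ_[2]} (h : D2 n x)
    (a : Matrix (Fin (2*3)) (Fin (2*3)) ℤ_[2]) : D2 n (a * x) := by
  obtain ⟨C, rfl⟩ := h
  exact ⟨a * C, by rw [mul_smul_comm]⟩

lemma D2.mul_right {n : ℕ} {x : Matrix (Fin (2*3)) (Fin (2*3)) ℤ_[2]} (h : D2 n x)
    (a : Matrix (Fin (2*3)) (Fin (2*3)) ℤ_[2]) : D2 n (x * a) := by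
  obtain ⟨C, rfl⟩ := h
  exact ⟨C * a, by rw [smul_mul_assoc]⟩

lemma D2.add {n : ℕ} {x y : Matrix (Fin (2*3)) (Fin (2*3)) ℤ_[2]} (h : D2 n x)
    (h' : D2 n y) : D2 n (x + y) := by
  obtain ⟨C, rfl⟩ := h
  obtain ⟨C', rfl⟩ := h'
  exact ⟨C + C', by rw [smul_add]⟩

lemma D2.mono {m n : ℕ} (hmn : m ≤ n) {x : Matrix (Fin (2*3)) (Fin (2*3)) ℤ_[2]} (h : D2 n x) :
    D2 m x := by
  obtain ⟨C, rfl⟩ := h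
  obtain ⟨k, rfl⟩ := Nat.exists_eq_add_of_le hmn
  exact ⟨(2:ℤ_[2])^k • C, by rw [smul_smul, pow_add]⟩

lemma D2_of_entries {n : ℕ} {x : Matrix (Fin (2*3)) (Fin (2*3)) ℤ_[2]}
    (h : ∀ i j, (2:ℤ_[2])^n ∣ x i j) : D2 n x := by
  choose C hC using h
  exact ⟨Matrix.of C, by ext i j; simp [hC i j]⟩

lemma D2_of_redMod8 {x y : GL (Fin (2*3)) ℤ_[2]} (h : redMod8 3 x = redMod8 3 y) :
    D2 3 (x.val - y.val) := by
  apply D2_of_entries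
  intro i j
  have h1 := congrArg (fun g : GL (Fin (2*3)) (ZMod (2^3)) => g.val i j) h
  have h2 : PadicInt.toZModPow (p := 2) 3 (x.val i j) = PadicInt.toZModPow 3 (y.val i j) := h1
  have h3 : x.val i j - y.val i j ∈ RingHom.ker (PadicInt.toZModPow (p := 2) 3) := by
    rw [RingHom.mem_ker, map_sub, h2, sub_self]
  rw [PadicInt.ker_toZModPow, Ideal.mem_span_singleton] at h3
  simpa using h3

lemma toZMod_two_pow (m : ℕ) : PadicInt.toZMod (p := 2) ((2:ℤ_[2])^(m+1)) = 0 := by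
  have : PadicInt.toZMod (p := 2) (2:ℤ_[2]) = 0 := by
    rw [map_ofNat]; rfl
  rw [pow_succ, map_mul, this, mul_zero]

lemma redMod2_eq {x y : GL (Fin (2*3)) ℤ_[2]} (h : D2 1 (x.val - y.val)) :
    redMod2 3 x = redMod2 3 y := by
  obtain ⟨C, hC⟩ := h
  apply Units.ext
  ext i j
  change PadicInt.toZMod (x.val i j) = PadicInt.toZMod (y.val i j)
  have h1 : x.val i j - y.val i j = (2:ℤ_[2])^1 * C i j := by
    have := congrFun (congrFun hC i) j
    simpa using this
  rw [← sub_eq_zero, ← map_sub, h1, map_mul, toZMod_two_pow 0, zero_mul]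

lemma isUnit_one_add (m : ℕ) (A : Matrix (Fin (2*3)) (Fin (2*3)) ℤ_[2]) :
    IsUnit (1 + ((2:ℤ_[2])^(m+1)) • A) := by
  rw [Matrix.isUnit_iff_isUnit_det]
  have h1 : PadicInt.toZMod (1 + ((2:ℤ_[2])^(m+1)) • A).det = 1 := by
    rw [RingHom.map_det]
    have : (PadicInt.toZMod (p := 2)).mapMatrix (1 + ((2:ℤ_[2])^(m+1)) • A) = 1 := by
      rw [map_add, map_one]
      convert add_zero _
      ext i j
      change PadicInt.toZMod ((2:ℤ_[2])^(m+1) * A i j) = 0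
      rw [map_mul, toZMod_two_pow, zero_mul]
    rw [this, Matrix.det_one]
  by_contra hne
  have h2 : (1 + ((2:ℤ_[2])^(m+1)) • A).det ∈ IsLocalRing.maximalIdeal ℤ_[2] := hne
  rw [← PadicInt.ker_toZMod, RingHom.mem_ker, h1] at h2
  exact one_ne_zero h2

lemma Sp_of_eq {x y : GL (Fin (2*3)) ℤ_[2]}
    (hy : y.valᵀ * OmegaMat 3 ℤ_[2] * y.val = x.valᵀ * OmegaMat 3 ℤ_[2] * x.val) :
    y * x⁻¹ ∈ SpSet 3 ℤ_[2] := by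
  change (y * x⁻¹).valᵀ * OmegaMat 3 ℤ_[2] * (y * x⁻¹).val = OmegaMat 3 ℤ_[2]
  have h1 : x.val * (x⁻¹).val = 1 := x.mul_inv
  have h2 : ((x⁻¹).val)ᵀ * x.valᵀ = 1 := by rw [← Matrix.transpose_mul, h1, Matrix.transpose_one]
  rw [Units.val_mul, Matrix.transpose_mul]
  calc _ = ((x⁻¹).val)ᵀ * (y.valᵀ * OmegaMat 3 ℤ_[2] * y.val) * (x⁻¹).val := by
        simp only [mul_assoc]
    _ = (((x⁻¹).val)ᵀ * x.valᵀ) * OmegaMat 3 ℤ_[2] * (x.val * (x⁻¹).val) := by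
        rw [hy]; simp only [mul_assoc]
    _ = _ := by rw [h1, h2, one_mul, mul_one]

lemma Sp_mul {x y : GL (Fin (2*3)) ℤ_[2]} (hx : x ∈ SpSet 3 ℤ_[2]) (hy : y ∈ SpSet 3 ℤ_[2]) :
    x * y ∈ SpSet 3 ℤ_[2] := by
  change (x * y).valᵀ * OmegaMat 3 ℤ_[2] * (x * y).val = OmegaMat 3 ℤ_[2]
  have hx' : x.valᵀ * OmegaMat 3 ℤ_[2] * x.val = OmegaMat 3 ℤ_[2] := hx
  have hy' : y.valᵀ * OmegaMat 3 ℤ_[2] * y.val = OmegaMat 3 ℤ_[2] := hy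
  rw [Units.val_mul, Matrix.transpose_mul]
  calc _ = y.valᵀ * (x.valᵀ * OmegaMat 3 ℤ_[2] * x.val) * y.val := by simp only [mul_assoc]
    _ = _ := by rw [hx', hy']

lemma Sp_inv {x : GL (Fin (2*3)) ℤ_[2]} (hx : x ∈ SpSet 3 ℤ_[2]) : x⁻¹ ∈ SpSet 3 ℤ_[2] := by
  have hx' : x.valᵀ * OmegaMat 3 ℤ_[2] * x.val = OmegaMat 3 ℤ_[2] := hx
  have := Sp_of_eq (x := x) (y := 1) (by rw [hx']; simp)
  simpa using this

/-- Approximate square roots in the congruence subgroups, via `z = (3y+1)(y+3)⁻¹`. -/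
lemma exists_root (k : ℕ) {y : GL (Fin (2*3)) ℤ_[2]} (hy : y ∈ SpSet 3 ℤ_[2])
    (h : D2 (k+3) (y.val - 1)) :
    ∃ z : GL (Fin (2*3)) ℤ_[2], z ∈ SpSet 3 ℤ_[2] ∧ D2 1 (z.val - 1) ∧
      D2 (k+4) (z.val * z.val - y.val) := by
  obtain ⟨A, hA⟩ := h
  obtain ⟨u, hu⟩ := isUnit_one_add k A
  obtain ⟨v, hv⟩ := isUnit_one_add k ((3:ℤ_[2]) • A)
  set B := ((2:ℤ_[2])^(k+1)) • A with hB
  have hv' : v.val = 1 + (3:ℤ_[2]) • B := by rw [hv, hB, smul_comm]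
  have hyB : y.val = 1 + (4:ℤ_[2]) • B := by
    rw [eq_add_of_sub_eq' hA, hB, smul_smul]; congr 2; ring
  have hi : u.val * (u⁻¹).val = 1 := u.mul_inv
  have hi' : (u⁻¹).val * u.val = 1 := u.inv_mul
  have hcomm : u.val * v.val = v.val * u.val := by
    rw [hu, hv']; simp [add_mul, mul_add]; abel
  have hz1 : (v * u⁻¹).val - 1 = ((2:ℤ_[2])^1) • (B * (u⁻¹).val) := by
    have : v.val = u.val + (2:ℤ_[2]) • B := by rw [hu, hv']; module
    rw [Units.val_mul, this, add_mul, hi]; simp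
  have hc2 : (u⁻¹).val * v.val = v.val * (u⁻¹).val := by
    calc _ = (u⁻¹).val * (v.val * u.val) * (u⁻¹).val := by simp only [mul_assoc, hi, mul_one]
      _ = _ := by rw [← hcomm, ← mul_assoc, hi', one_mul]
  have hz2 : (v * u⁻¹).val * (v * u⁻¹).val - y.val
      = ((-4:ℤ_[2]) • (B * B * B)) * ((u⁻¹).val * (u⁻¹).val) := by
    have e1 : v.val * v.val - y.val * (u.val * u.val) = (-4:ℤ_[2]) • (B * B * B) := by
      rw [hv', hyB, hu]
      simp only [add_mul, mul_add, mul_one, one_mul, smul_mul_assoc, mul_smul_comm, ← mul_assoc]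
      module
    rw [← e1, sub_mul, Units.val_mul]
    congr 1
    · calc _ = v.val * ((u⁻¹).val * v.val) * (u⁻¹).val := by simp only [mul_assoc]
        _ = _ := by rw [hc2]; simp only [mul_assoc]
    · calc _ = y.val * (u.val * (u.val * (u⁻¹).val) * (u⁻¹).val) := by simp
        _ = _ := by simp only [mul_assoc]
  refine ⟨v * u⁻¹, ?_, ⟨_, hz1⟩, ?_⟩
  · apply Sp_of_eq
    have hy' : y.valᵀ * OmegaMat 3 ℤ_[2] * y.val = OmegaMat 3 ℤ_[2] := hy
    generalize OmegaMat 3 ℤ_[2] = W at hy' ⊢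
    rw [hyB] at hy'
    rw [hv', hu]
    simp only [Matrix.transpose_add, Matrix.transpose_smul, Matrix.transpose_one,
      add_mul, mul_add, mul_one, one_mul, smul_mul_assoc, mul_smul_comm] at hy' ⊢
    have h2 : (2:ℤ_[2]) ≠ 0 := two_ne_zero
    ext i j
    have := congrFun (congrFun hy' i) j
    simp only [Matrix.add_apply, Matrix.smul_apply, smul_eq_mul] at this ⊢
    apply mul_left_cancel₀ h2
    linear_combination this
  · rw [hz2]
    apply D2.mul_right
    refine ⟨(-(2:ℤ_[2])^(2*k+1)) • (A * A * A), ?_⟩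
    rw [hB]
    simp only [smul_mul_assoc, mul_smul_comm, smul_smul]
    congr 1
    ring

lemma one_represents : representsPerm 3 1 1 := by
  intro j
  have : (fun k => (PsiMat 3 * (1 : Matrix (Fin (2*3)) (Fin (2*3)) (ZMod 2)) - permMat 3 1 * PsiMat 3) k j) = 0 := by
    have h : permMat 3 1 = 1 := by
      ext a b
      simp [permMat, Matrix.one_apply, eq_comm]
    rw [h]; ext k; simp
  rw [this]
  exact Submodule.zero_mem _

lemma mem_Stilde_of {z : GL (Fin (2*3)) ℤ_[2]} (hz : z ∈ SpSet 3 ℤ_[2])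
    (h : D2 1 (z.val - 1)) : z ∈ StildeSet := by
  refine ⟨hz, 1, ?_⟩
  have : redMod2 3 z = redMod2 3 1 := redMod2_eq (by simpa using h)
  rw [this, map_one]
  exact one_represents

lemma sq_approx (k : ℕ) {a z : Matrix (Fin (2*3)) (Fin (2*3)) ℤ_[2]} (hz : D2 1 (z - 1))
    (h : D2 (k+3) (a - z)) : D2 (k+4) (a * a - z * z) := by
  obtain ⟨C, hC⟩ := hz
  obtain ⟨E, hE⟩ := h
  refine ⟨E + C * E + E * C + (2:ℤ_[2])^(k+2) • (E * E), ?_⟩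
  rw [eq_add_of_sub_eq' hE, eq_add_of_sub_eq' hC]
  simp only [add_mul, mul_add, mul_one, one_mul, smul_mul_assoc, mul_smul_comm, smul_add,
    smul_smul]
  module

lemma approx (H : Subgroup (GL (Fin (2*3)) ℤ_[2]))
    (hSp : (H : Set (GL (Fin (2*3)) ℤ_[2])) ⊆ SpSet 3 ℤ_[2])
    (himg : redMod8 3 '' (H : Set (GL (Fin (2*3)) ℤ_[2])) = redMod8 3 '' StildeSet) (k : ℕ) :
    ∀ x ∈ StildeSet, ∃ h ∈ H, D2 (k+3) (h.val - x.val) := by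
  induction k with
  | zero =>
    intro x hx
    have : redMod8 3 x ∈ redMod8 3 '' (H : Set (GL (Fin (2*3)) ℤ_[2])) := by
      rw [himg]; exact ⟨x, hx, rfl⟩
    obtain ⟨h, hh, he⟩ := this
    exact ⟨h, hh, D2_of_redMod8 he⟩
  | succ k ih =>
    intro x hx
    obtain ⟨h, hh, hd⟩ := ih x hx
    have hi : (h⁻¹).val * h.val = 1 := h.inv_mul
    have hi' : h.val * (h⁻¹).val = 1 := h.mul_inv
    have hyS : h⁻¹ * x ∈ SpSet 3 ℤ_[2] := Sp_mul (Sp_inv (hSp hh)) hx.1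
    have hy : D2 (k+3) ((h⁻¹ * x).val - 1) := by
      have := hd.mul_left (-(h⁻¹).val)
      rwa [neg_mul, mul_sub, hi, neg_sub] at this
    obtain ⟨z, hzS, hz1, hz2⟩ := exists_root k hyS hy
    obtain ⟨a, ha, had⟩ := ih z (mem_Stilde_of hzS hz1)
    refine ⟨h * (a * a), H.mul_mem hh (H.mul_mem ha ha), ?_⟩
    have h1 := ((sq_approx k hz1 had).add hz2).mul_left h.val
    rw [sub_add_sub_cancel, Units.val_mul, mul_sub, ← mul_assoc h.val (h⁻¹).val, hi', one_mul] at h1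
    exact h1

lemma tendsto_of_D2 {f : ℕ → Matrix (Fin (2*3)) (Fin (2*3)) ℤ_[2]}
    {x : Matrix (Fin (2*3)) (Fin (2*3)) ℤ_[2]} (h : ∀ k, D2 (k+3) (f k - x)) :
    Filter.Tendsto f Filter.atTop (nhds x) := by
  refine tendsto_pi_nhds.2 fun i => tendsto_pi_nhds.2 fun j => ?_
  rw [tendsto_iff_norm_sub_tendsto_zero]
  refine squeeze_zero (g := fun k : ℕ => ((1:ℝ)/2)^k) (fun _ => norm_nonneg _) (fun k => ?_)
    (tendsto_pow_atTop_nhds_zero_of_lt_one (by norm_num) (by norm_num))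
  obtain ⟨C, hC⟩ := (h k).mono (show k ≤ k+3 by omega)
  have h1 : f k i j - x i j = (2:ℤ_[2])^k * C i j := by
    have := congrFun (congrFun hC i) j
    simpa using this
  rw [h1, norm_mul, norm_pow]
  have h2 : ‖(2:ℤ_[2])‖ = 1/2 := by
    have := PadicInt.norm_p (p := 2)
    simpa using this
  rw [h2]
  exact mul_le_of_le_one_right (by positivity) (PadicInt.norm_le_one _)

/-- If `H ⊆ Sp_6(ℤ_2)` is a closed subgroup whose image under reduction modulo `8` equals
the image of `S̃_8` under reduction modulo `8`, then `H = S̃_8`. -/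
theorem maximal_monodromy_stmt14
    (H : Subgroup (GL (Fin (2*3)) ℤ_[2]))
    (hclosed : IsClosed (H : Set (GL (Fin (2*3)) ℤ_[2])))
    (hSp : (H : Set (GL (Fin (2*3)) ℤ_[2])) ⊆ SpSet 3 ℤ_[2])
    (himg : redMod8 3 '' (H : Set (GL (Fin (2*3)) ℤ_[2])) = redMod8 3 '' StildeSet) :
    (H : Set (GL (Fin (2*3)) ℤ_[2])) = StildeSet := by
  apply Set.Subset.antisymm
  · intro h hh
    have : redMod8 3 h ∈ redMod8 3 '' StildeSet := by rw [← himg]; exact ⟨h, hh, rfl⟩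
    obtain ⟨s, ⟨_, σ, hσ⟩, he⟩ := this
    refine ⟨hSp hh, σ, ?_⟩
    rw [← redMod2_eq ((D2_of_redMod8 he).mono (by norm_num))]
    exact hσ
  · intro x hx
    choose f hfH hf using fun k => approx H hSp himg k x hx
    refine hclosed.mem_of_tendsto (f := f) (b := Filter.atTop) ?_ (Filter.Eventually.of_forall hfH)
    rw [Units.isEmbedding_embedProduct.tendsto_nhds_iff]
    refine Filter.Tendsto.prodMk_nhds (tendsto_of_D2 hf) ?_
    refine (MulOpposite.continuous_op.tendsto _).comp (tendsto_of_D2 fun k => ?_)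
    have h1 := ((hf k).mul_left (-(f k)⁻¹.val)).mul_right (x⁻¹).val
    have e1 : (f k)⁻¹.val * (f k).val = 1 := (f k).inv_mul
    have e2 : x.val * (x⁻¹).val = 1 := x.mul_inv
    have e3 : -(f k)⁻¹.val * ((f k).val - x.val) * (x⁻¹).val
        = (f k)⁻¹.val - (x⁻¹).val := by
      rw [neg_mul, mul_sub, e1, neg_sub, sub_mul, mul_assoc, e2, mul_one, one_mul]
    rwa [e3] at h1
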